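/- arXiv:2305.13065 — 8 statements merged into one kernel-verified Lean document; each statement's English description precedes it below -/
import Mathlib

section
/- For every ℓ ∈ {0,…,M}, the ℓ-th row sum of the ADER matrix B equals the value of the ℓ-th Lagrange basis polynomial at 0, i.e. Σ_{m=0}^{M} B_{ℓm} = ψ̂ˡ(0). Consequently, if B is invertible and r ∈ ℝ^{M+1} is the vector with entries r_ℓ = ψ̂ˡ(0)·u_n for a fixed real number u_n, then B⁻¹ r is the constant vector (u_n,…,u_n)ᵀ. -/
/-!
The Lagrange basis is a partition of unity, `∑ m, ψ m = 1`, since both sides have degree at most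
`M` and agree at the `M + 1` nodes. Summing a row of `B` therefore replaces `ψ m` by `1`, and the
fundamental theorem of calculus gives `ψ l 1 - ∫ (ψ l)' = ψ l 0`. Hence `B` maps the constant
vector `c` to `l ↦ ψ l 0 * c`, and inverting `B` gives the second claim.
-/

open Finset MeasureTheory Polynomial
open scoped Matrix Interval

theorem sum_eq_one_of_eval_eq_ite {R ι : Type*} [CommRing R] [IsDomain R] [DecidableEq ι]
    {s : Finset ι} {v : ι → R} {p : ι → R[X]} (hv : Set.InjOn v s) (hs : s.Nonempty)
    (hdeg : ∀ i ∈ s, (p i).natDegree < #s)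
    (heval : ∀ i ∈ s, ∀ j ∈ s, (p i).eval (v j) = if i = j then 1 else 0) :
    ∑ i ∈ s, p i = 1 := by
  have hdeg_sum : (∑ i ∈ s, p i).degree < #s :=
    mem_degreeLT.1 <| Submodule.sum_mem _ fun i hi =>
      mem_degreeLT.2 <| degree_le_natDegree.trans_lt <| Nat.cast_lt.2 (hdeg i hi)
  have hdeg_one : (1 : R[X]).degree < #s := by
    simpa only [degree_one, Nat.cast_pos] using hs.card_pos
  refine eq_of_degrees_lt_of_eval_index_eq s hv hdeg_sum hdeg_one fun j hj => ?_
  rw [eval_finsetSum, sum_congr rfl fun i hi => heval i hi j hj, sum_ite_eq_of_mem' s j _ hj,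
    eval_one]

theorem sum_integral_mul_of_sum_eq_one {A ι : Type*} [NormedRing A] [NormedAlgebra ℝ A]
    {s : Finset ι} {μ : Measure ℝ} {a b : ℝ} {f : ℝ → A} {φ : ι → ℝ → A}
    (hint : ∀ i ∈ s, IntervalIntegrable (fun x => f x * φ i x) μ a b)
    (hsum : ∀ x ∈ [[a, b]], ∑ i ∈ s, φ i x = 1) :
    ∑ i ∈ s, ∫ x in a..b, f x * φ i x ∂μ = ∫ x in a..b, f x ∂μ := by
  rw [← intervalIntegral.integral_finsetSum hint]
  refine intervalIntegral.integral_congr fun x hx => ?_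
  simp only [← mul_sum, hsum x hx, mul_one]

/-- The ADER matrix on the time interval `[a, b]` of a family of basis functions `φ` with
derivatives `φ'`: the weak form of `d/dt`, tested against `φ l` and integrated by parts, without the
boundary term at `a`, which carries the initial value and belongs to the right-hand side of the
scheme. The derivatives are an argument, so that `deriv` cannot take junk values. -/
noncomputable def aderMatrix {A ι : Type*} [NormedRing A] [NormedAlgebra ℝ A] (a b : ℝ)
    (φ φ' : ι → ℝ → A) : Matrix ι ι A :=
  Matrix.of fun l m => φ l b * φ m b - ∫ x in a..b, φ' l x * φ m x

theorem sum_aderMatrix_row {A ι : Type*} [NormedRing A] [NormedAlgebra ℝ A] [CompleteSpace A]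
    [Fintype ι] {a b : ℝ} {φ φ' : ι → ℝ → A}
    (hderiv : ∀ l, ∀ x ∈ [[a, b]], HasDerivAt (φ l) (φ' l x) x)
    (hint : ∀ l, IntervalIntegrable (φ' l) volume a b)
    (hsum : ∀ x ∈ [[a, b]], ∑ m, φ m x = 1) (l : ι) :
    ∑ m, aderMatrix a b φ φ' l m = φ l a := by
  have hint_mul (m : ι) : IntervalIntegrable (fun x => φ' l x * φ m x) volume a b :=
    (hint l).mul_continuousOn (HasDerivAt.continuousOn (hderiv m))
  calc ∑ m, aderMatrix a b φ φ' l m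
      = φ l b * ∑ m, φ m b - ∑ m, ∫ x in a..b, φ' l x * φ m x := by
        simp only [aderMatrix, Matrix.of_apply, sum_sub_distrib, mul_sum]
    _ = φ l b - ∫ x in a..b, φ' l x := by
        rw [hsum b Set.right_mem_uIcc, mul_one,
          sum_integral_mul_of_sum_eq_one (fun m _ => hint_mul m) hsum]
    _ = φ l a := by
        rw [intervalIntegral.integral_eq_sub_of_hasDerivAt (hderiv l) (hint l), sub_sub_cancel]

theorem inv_mulVec_sum_row_mul {R n : Type*} [CommRing R] [Fintype n] [DecidableEq n]
    {B : Matrix n n R} (hB : IsUnit B.det) (c : R) :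
    B⁻¹ *ᵥ (fun i => (∑ j, B i j) * c) = fun _ => c := by
  let := B.invertibleOfIsUnitDet hB
  refine Matrix.inv_mulVec_eq_vec <| funext fun i => ?_
  simp only [Matrix.mulVec, dotProduct, sum_mul]

theorem ader_row_sum_and_inverse_general {A ι : Type*} [NormedCommRing A] [NormedAlgebra ℝ A]
    [CompleteSpace A] [Fintype ι] [DecidableEq ι] {a b : ℝ} {φ φ' : ι → ℝ → A}
    (hderiv : ∀ l, ∀ x ∈ [[a, b]], HasDerivAt (φ l) (φ' l x) x)
    (hint : ∀ l, IntervalIntegrable (φ' l) volume a b)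
    (hsum : ∀ x ∈ [[a, b]], ∑ m, φ m x = 1) :
    (∀ l, ∑ m, aderMatrix a b φ φ' l m = φ l a) ∧
    (IsUnit (aderMatrix a b φ φ').det → ∀ c : A,
      (aderMatrix a b φ φ')⁻¹ *ᵥ (fun l => φ l a * c) = fun _ => c) := by
  have hrow := sum_aderMatrix_row hderiv hint hsum
  refine ⟨hrow, fun hdet c => ?_⟩
  simpa only [hrow] using inv_mulVec_sum_row_mul hdet c

/-- For every ℓ, the ℓ-th row sum of the ADER matrix B equals ψ̂ˡ(0); consequently,
if B is invertible and r has entries ψ̂ˡ(0)·u_n, then B⁻¹ r is the constant vector uₙ. -/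
theorem ader_row_sum_and_inverse
    (M : ℕ) (hM : 1 ≤ M)
    (ξ : Fin (M + 1) → ℝ)
    (hξ01 : ∀ m, ξ m ∈ Set.Icc (0 : ℝ) 1)
    (hξmono : StrictMono ξ)
    (ψ : Fin (M + 1) → Polynomial ℝ)
    (hψdeg : ∀ l, (ψ l).natDegree ≤ M)
    (hψeval : ∀ l m, (ψ l).eval (ξ m) = if l = m then 1 else 0)
    (Bmat Lam : Matrix (Fin (M + 1)) (Fin (M + 1)) ℝ)
    (hB : ∀ l m, Bmat l m = (ψ l).eval 1 * (ψ m).eval 1 -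
        ∫ x in (0 : ℝ)..1, (ψ l).derivative.eval x * (ψ m).eval x)
    (hLam : ∀ l m, Lam l m = ∫ x in (0 : ℝ)..1, (ψ l).eval x * (ψ m).eval x)
    (w : Fin (M + 1) → ℝ)
    (hw : ∀ m, w m = ∫ x in (0 : ℝ)..1, (ψ m).eval x) :
    (∀ l, ∑ m, Bmat l m = (ψ l).eval 0) ∧
    (IsUnit Bmat.det → ∀ un : ℝ,
      Bmat⁻¹.mulVec (fun l => (ψ l).eval 0 * un) = fun _ => un) := by
  obtain rfl : Bmat = aderMatrix 0 1 (fun l x => (ψ l).eval x) fun l x => (ψ l).derivative.eval x :=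
    Matrix.ext hB
  have hsum : ∑ m, ψ m = 1 :=
    sum_eq_one_of_eval_eq_ite hξmono.injective.injOn univ_nonempty
      (fun l _ => by simpa only [card_fin] using Nat.lt_succ_of_le (hψdeg l))
      fun l _ m _ => hψeval l m
  exact ader_row_sum_and_inverse_general (fun l x _ => (ψ l).hasDerivAt x)
    (fun l => (ψ l).derivative.continuous.intervalIntegrable 0 1)
    fun x _ => by rw [← eval_finsetSum, hsum, eval_one]
end

section
/- Assume B is invertible, let G : ℝ × ℝ^Q → ℝ^Q satisfy ‖G(t,u) − G(t,v)‖_∞ ≤ C‖u − v‖_∞ for all t ∈ ℝ and u,v ∈ ℝ^Q (with C ≥ 0), fix t_n ∈ ℝ, u_n ∈ ℝ^Q, and Δt > 0, and set tᵐ = t_n + Δt·ξᵐ. Define J : (ℝ^Q)^{M+1} → (ℝ^Q)^{M+1} by J(u)_ℓ = u_n + Δt Σ_{m=0}^{M} (B⁻¹Λ)_{ℓm} G(tᵐ, uᵐ), and equip (ℝ^Q)^{M+1} with the norm ‖u‖_∞ = max_{0≤m≤M} ‖uᵐ‖_∞. If Δt·‖B⁻¹Λ‖_∞·C < 1, where ‖A‖_∞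 = max_ℓ Σ_m |A_{ℓm}| is the maximum absolute row sum, then J has a unique fixed point u*, and for every initial vector u⁽⁰⁾ the iterates u⁽ᵖ⁾ = J(u⁽ᵖ⁻¹⁾) converge to u* as p → ∞. -/
/-!
The map `u ↦ (b l + h ∑ m, A l m • F m (u m))_l` is a composition of three maps: the nodewise
application of `F`, with Lipschitz constant `C`; the linear action of `A`, whose operator norm for
the maximum norms is at most the maximal absolute row sum; and an affine map scaling by `‖h‖`. So it
is Lipschitz with constant `‖h‖ ‖A‖ C`, and Banach's fixed point theorem applies once this is less
than one.
-/

open Filter Function Topology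
open scoped NNReal

section StageEquations

open scoped Matrix.Norms.Operator

variable {ι κ 𝕜 E X : Type*} [Fintype κ]

/-- The right-hand side of the stage equations of an implicit one-step method with base values `b`,
step size `h`, coefficient matrix `A` and vector field `F m` at the `m`-th node; the iterates of
this map are the fixed-point iteration for the stages. For ADER, `A = B⁻¹Λ` and `F m = G(tᵐ, ·)`.
The input may have another index type and other values than the output, since only the fixed-point
theorem needs a self-map. -/
def stageMap [AddCommMonoid E] [SMul 𝕜 E] (b : ι → E) (h : 𝕜) (A : Matrix ι κ 𝕜)
    (F : κ → X → E) (u : κ → X) : ι → E :=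
  fun l => b l + h • ∑ m, A l m • F m (u m)

theorem lipschitzWith_piMap {α β : κ → Type*} [∀ m, PseudoEMetricSpace (α m)]
    [∀ m, PseudoEMetricSpace (β m)] {C : ℝ≥0} {F : ∀ m, α m → β m}
    (hF : ∀ m, LipschitzWith C (F m)) : LipschitzWith C (Pi.map F) := fun u v =>
  edist_pi_le_iff.2 fun m => (hF m).edist_le_mul_of_le (edist_le_pi_edist u v m)

variable [Fintype ι]

theorem linfty_opNorm_eq_iSup [SeminormedAddCommGroup E] (A : Matrix ι κ E) :
    ‖A‖ = ⨆ l, ∑ m, ‖A l m‖ := by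
  cases isEmpty_or_nonempty ι with
  | inl _ => simp [Matrix.linfty_opNorm_def]
  | inr _ =>
    rw [Matrix.linfty_opNorm_def, ← Finset.sup'_eq_sup Finset.univ_nonempty,
      Finset.sup'_univ_eq_ciSup, NNReal.coe_iSup]
    simp only [NNReal.coe_sum, coe_nnnorm]

variable [SeminormedRing 𝕜] [SeminormedAddCommGroup E] [Module 𝕜 E] [IsBoundedSMul 𝕜 E]

theorem nnnorm_sum_smul_le_linfty_opNNNorm_mul (A : Matrix ι κ 𝕜) (u : κ → E) (l : ι) :
    ‖∑ m, A l m • u m‖₊ ≤ ‖A‖₊ * ‖u‖₊ :=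
  calc ‖∑ m, A l m • u m‖₊
      ≤ ∑ m, ‖A l m‖₊ * ‖u‖₊ := nnnorm_sum_le_of_le _ fun m _ =>
        (nnnorm_smul_le _ _).trans (by gcongr; exact nnnorm_le_pi_nnnorm u m)
    _ = (∑ m, ‖A l m‖₊) * ‖u‖₊ := (Finset.sum_mul ..).symm
    _ ≤ ‖A‖₊ * ‖u‖₊ := by
        gcongr
        rw [Matrix.linfty_opNNNorm_def]
        exact Finset.le_sup (f := fun l => ∑ m, ‖A l m‖₊) (Finset.mem_univ l)

theorem lipschitzWith_sum_smul (A : Matrix ι κ 𝕜) :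
    LipschitzWith ‖A‖₊ fun (u : κ → E) l => ∑ m, A l m • u m :=
  LipschitzWith.of_dist_le_mul fun u v => by
    refine (dist_pi_le_iff (by positivity)).2 fun l => ?_
    rw [dist_eq_norm, dist_eq_norm, ← Finset.sum_sub_distrib]
    simp only [← smul_sub]
    exact nnnorm_sum_smul_le_linfty_opNNNorm_mul A (u - v) l

theorem lipschitzWith_stageMap [PseudoEMetricSpace X] (b : ι → E) (h : 𝕜) (A : Matrix ι κ 𝕜)
    {F : κ → X → E} {C : ℝ≥0} (hF : ∀ m, LipschitzWith C (F m)) :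
    LipschitzWith (‖h‖₊ * ‖A‖₊ * C) (stageMap b h A F) := by
  have translate : LipschitzWith 1 (b + ·) := (isometry_add_left b).lipschitz
  have scale : LipschitzWith ‖h‖₊ (h • · : (ι → E) → ι → E) := lipschitzWith_smul h
  have composite := translate.comp <| scale.comp <|
    (lipschitzWith_sum_smul A).comp (lipschitzWith_piMap hF)
  rwa [one_mul, ← mul_assoc] at composite

end StageEquations

theorem ader_iteration_converges_general {ι 𝕜 E : Type*} [Fintype ι] [SeminormedRing 𝕜]
    [NormedAddCommGroup E] [CompleteSpace E] [Module 𝕜 E] [IsBoundedSMul 𝕜 E]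
    (b : ι → E) (h : 𝕜) (A : Matrix ι ι 𝕜) {F : ι → E → E} {C : ℝ≥0}
    (hF : ∀ m, LipschitzWith C (F m)) (hcontr : ‖h‖ * (⨆ l, ∑ m, ‖A l m‖) * C < 1) :
    ∃ ustar : ι → E, IsFixedPt (stageMap b h A F) ustar ∧
      (∀ u, IsFixedPt (stageMap b h A F) u → u = ustar) ∧
      ∀ u₀, Tendsto (fun p => (stageMap b h A F)^[p] u₀) atTop (𝓝 ustar) := by
  rw [← linfty_opNorm_eq_iSup] at hcontr
  have hJ : ContractingWith _ (stageMap b h A F) := ⟨hcontr, lipschitzWith_stageMap b h A hF⟩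
  exact ⟨hJ.fixedPoint, hJ.fixedPoint_isFixedPt, fun _ => hJ.fixedPoint_unique,
    hJ.tendsto_iterate_fixedPoint⟩

/-- Convergence of the ADER fixed-point iteration: if Δt·‖B⁻¹Λ‖_∞·C < 1, the map J has a
unique fixed point, and the iterates converge to it from any starting point. -/
theorem ader_iteration_converges
    (M : ℕ) (hM : 1 ≤ M)
    (ξ : Fin (M + 1) → ℝ)
    (hξ01 : ∀ m, ξ m ∈ Set.Icc (0 : ℝ) 1)
    (hξmono : StrictMono ξ)
    (ψ : Fin (M + 1) → Polynomial ℝ)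
    (hψdeg : ∀ l, (ψ l).natDegree ≤ M)
    (hψeval : ∀ l m, (ψ l).eval (ξ m) = if l = m then 1 else 0)
    (Bmat Lam : Matrix (Fin (M + 1)) (Fin (M + 1)) ℝ)
    (hB : ∀ l m, Bmat l m = (ψ l).eval 1 * (ψ m).eval 1 -
        ∫ x in (0 : ℝ)..1, (ψ l).derivative.eval x * (ψ m).eval x)
    (hLam : ∀ l m, Lam l m = ∫ x in (0 : ℝ)..1, (ψ l).eval x * (ψ m).eval x)
    (w : Fin (M + 1) → ℝ)
    (hw : ∀ m, w m = ∫ x in (0 : ℝ)..1, (ψ m).eval x)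
    (hBinv : IsUnit Bmat.det)
    (Q : ℕ) (G : ℝ → (Fin Q → ℝ) → (Fin Q → ℝ)) (C : ℝ) (hC : 0 ≤ C)
    (hG : ∀ (t : ℝ) (u v : Fin Q → ℝ), ‖G t u - G t v‖ ≤ C * ‖u - v‖)
    (tn : ℝ) (un : Fin Q → ℝ) (Δt : ℝ) (hΔt : 0 < Δt)
    (J : (Fin (M + 1) → Fin Q → ℝ) → (Fin (M + 1) → Fin Q → ℝ))
    (hJ : ∀ u l, J u l = un + Δt • ∑ m, ((Bmat⁻¹ * Lam) l m) • G (tn + Δt * ξ m) (u m))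
    (hcontr : Δt * (⨆ l, ∑ m, |(Bmat⁻¹ * Lam) l m|) * C < 1) :
    ∃ ustar : Fin (M + 1) → Fin Q → ℝ,
      J ustar = ustar ∧ (∀ u, J u = u → u = ustar) ∧
      ∀ u0, Filter.Tendsto (fun p => J^[p] u0) Filter.atTop (nhds ustar) := by
  obtain rfl : J = stageMap (fun _ => un) Δt (Bmat⁻¹ * Lam) fun m => G (tn + Δt * ξ m) :=
    funext₂ hJ
  exact ader_iteration_converges_general (C := ⟨C, hC⟩) _ _ _
    (fun m => lipschitzWith_iff_norm_sub_le.2 (hG _)) (by rwa [Real.norm_of_nonneg hΔt.le])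
end

section
/- For every integer M ≥ 0 and every family φ̂⁰,…,φ̂ᴹ of polynomials forming a basis of the real vector space of polynomials of degree at most M, the (M+1)×(M+1) matrix B with entries B_{ℓm} = φ̂ˡ(1)φ̂ᵐ(1) − ∫₀¹ (φ̂ˡ)′(ξ) φ̂ᵐ(ξ) dξ is invertible. -/
/-!
For `a < b`, let `B p q = p(b) q(b) - ∫ₐᵇ p' q`. The fundamental theorem of calculus for `p²` gives
`B p p = (p(a)² + p(b)²) / 2`. Hence if `B p` vanishes at `p` and at `p'`, then `p(b) = 0`, so
`0 = B p p' = -∫ₐᵇ p'²`; thus `p` is a constant that vanishes at `b`. A space of polynomials stable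
under differentiation contains `p'` along with `p`, so `B` separates its points.
-/

section

open Polynomial Module

/-- Integration of real polynomials over the interval from `a` to `b`, as a linear functional. -/
noncomputable def polynomialIntegral (a b : ℝ) : ℝ[X] →ₗ[ℝ] ℝ where
  toFun p := ∫ x in a..b, p.eval x
  map_add' p q := by
    simp only [eval_add]
    exact intervalIntegral.integral_add (p.continuous.intervalIntegrable _ _)
      (q.continuous.intervalIntegrable _ _)
  map_smul' c p := by
    simp only [eval_smul, RingHom.id_apply]
    exact intervalIntegral.integral_smul c _

/-- The bilinear form `(p, q) ↦ p(b) q(b) - ∫ₐᵇ p' q` on real polynomials, whose Gram matrix on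
`[a, b] = [0, 1]` is the ADER matrix of a family of polynomials. -/
noncomputable def aderForm (a b : ℝ) : LinearMap.BilinForm ℝ ℝ[X] :=
  (LinearMap.mul ℝ ℝ).compl₁₂ (leval b) (leval b) -
    ((LinearMap.mul ℝ ℝ[X]).comp derivative).compr₂ (polynomialIntegral a b)

variable {a b : ℝ}

theorem polynomialIntegral_apply (p : ℝ[X]) :
    polynomialIntegral a b p = ∫ x in a..b, p.eval x :=
  rfl

theorem aderForm_apply (p q : ℝ[X]) :
    aderForm a b p q = p.eval b * q.eval b - polynomialIntegral a b (derivative p * q) :=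
  rfl

theorem polynomialIntegral_derivative (p : ℝ[X]) :
    polynomialIntegral a b (derivative p) = p.eval b - p.eval a :=
  intervalIntegral.integral_eq_sub_of_hasDerivAt (fun x _ ↦ p.hasDerivAt x)
    ((derivative p).continuous.intervalIntegrable _ _)

theorem polynomialIntegral_derivative_mul_self (p : ℝ[X]) :
    polynomialIntegral a b (derivative p * p) = (p.eval b ^ 2 - p.eval a ^ 2) / 2 := by
  have integral_deriv_sq := polynomialIntegral_derivative (a := a) (b := b) (p * p)
  rw [derivative_mul, mul_comm p, map_add, eval_mul, eval_mul] at integral_deriv_sq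
  linarith

theorem eq_zero_of_polynomialIntegral_eq_zero (hab : a < b) {p : ℝ[X]}
    (hp : ∀ x ∈ Set.Icc a b, 0 ≤ p.eval x) (hint : polynomialIntegral a b p = 0) : p = 0 := by
  have eval_eq_zero : ∀ c ∈ Set.Icc a b, p.eval c = 0 := by
    intro c hc
    by_contra hpc
    have integral_pos : 0 < ∫ x in a..b, p.eval x :=
      intervalIntegral.integral_pos hab p.continuousOn
        (fun x hx ↦ hp x (Set.Ioc_subset_Icc_self hx)) ⟨c, hc, (hp c hc).lt_of_ne' hpc⟩
    exact integral_pos.ne' hint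
  exact eq_zero_of_infinite_isRoot p ((Set.Icc_infinite hab).mono eval_eq_zero)

theorem aderForm_self (p : ℝ[X]) :
    aderForm a b p p = (p.eval a ^ 2 + p.eval b ^ 2) / 2 := by
  rw [aderForm_apply, polynomialIntegral_derivative_mul_self]
  ring

theorem eq_zero_of_aderForm_eq_zero (hab : a < b) {p : ℝ[X]} (hself : aderForm a b p p = 0)
    (hderiv : aderForm a b p (derivative p) = 0) : p = 0 := by
  have eval_right : p.eval b = 0 := by
    rw [aderForm_self] at hself
    nlinarith [sq_nonneg (p.eval a), sq_nonneg (p.eval b)]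
  have integral_sq : polynomialIntegral a b (derivative p * derivative p) = 0 := by
    rwa [aderForm_apply, eval_right, zero_mul, zero_sub, neg_eq_zero] at hderiv
  have derivative_eq_zero : derivative p = 0 := by
    refine mul_self_eq_zero.mp
      (eq_zero_of_polynomialIntegral_eq_zero hab (fun x _ ↦ ?_) integral_sq)
    rw [eval_mul]
    exact mul_self_nonneg _
  have eq_const := eq_C_of_derivative_eq_zero derivative_eq_zero
  rw [eq_const, eval_C] at eval_right
  rw [eq_const, eval_right, C_0]

theorem separatingLeft_aderForm_domRestrict₁₂ (hab : a < b) {W : Submodule ℝ ℝ[X]}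
    (hW : ∀ p ∈ W, derivative p ∈ W) : ((aderForm a b).domRestrict₁₂ W W).SeparatingLeft :=
  fun p hp ↦ Subtype.ext <|
    eq_zero_of_aderForm_eq_zero hab (hp p) (hp ⟨derivative p, hW p p.2⟩)

theorem derivative_mem_degreeLT {R : Type*} [Semiring R] {n : ℕ} {p : R[X]}
    (hp : p ∈ degreeLT R n) : derivative p ∈ degreeLT R n :=
  mem_degreeLT.mpr (degree_derivative_le.trans_lt (mem_degreeLT.mp hp))

theorem finrank_degreeLT {R : Type*} [Ring R] [StrongRankCondition R] (n : ℕ) :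
    finrank R (degreeLT R n) = n := by
  rw [finrank_eq_card_basis (degreeLT.basis R n), Fintype.card_fin]

end

/-- Invertibility of the ADER matrix B for an arbitrary polynomial basis of degree ≤ M. -/
theorem ader_matrix_invertible
    (M : ℕ) (φ : Fin (M + 1) → Polynomial ℝ)
    (hφdeg : ∀ m, (φ m).natDegree ≤ M)
    (hφli : LinearIndependent ℝ φ)
    (Bφ : Matrix (Fin (M + 1)) (Fin (M + 1)) ℝ)
    (hBφ : ∀ l m, Bφ l m = (φ l).eval 1 * (φ m).eval 1 -
        ∫ x in (0 : ℝ)..1, (φ l).derivative.eval x * (φ m).eval x) :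
    IsUnit Bφ.det := by
  let W := Polynomial.degreeLT ℝ (M + 1)
  have mem_W (m : Fin (M + 1)) : φ m ∈ W :=
    Polynomial.mem_degreeLT.mpr
      (Polynomial.degree_le_natDegree.trans_lt (Nat.cast_lt.mpr (Nat.lt_succ_of_le (hφdeg m))))
  let φW (m : Fin (M + 1)) : W := ⟨φ m, mem_W m⟩
  have φW_linearIndependent : LinearIndependent ℝ φW := .of_comp W.subtype hφli
  let basis := basisOfLinearIndependentOfCardEqFinrank φW_linearIndependent
    ((Fintype.card_fin _).trans (finrank_degreeLT _).symm)
  have Bφ_eq_gram : Bφ = LinearMap.toMatrix₂ basis basis ((aderForm 0 1).domRestrict₁₂ W W) := by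
    ext l m
    rw [hBφ, LinearMap.toMatrix₂_apply, coe_basisOfLinearIndependentOfCardEqFinrank,
      LinearMap.domRestrict₁₂_apply, aderForm_apply, polynomialIntegral_apply]
    simp only [φW, Polynomial.eval_mul]
  rw [Bφ_eq_gram, isUnit_iff_ne_zero, ← LinearMap.separatingLeft_iff_det_ne_zero]
  exact separatingLeft_aderForm_domRestrict₁₂ one_pos fun _ ↦ derivative_mem_degreeLT
end

section
/- Let X and Y be normed real vector spaces, let L¹, L² : X → Y be (possibly nonlinear) maps, let Δ > 0, α₁ > 0, α₂ ≥ 0, and let u_Δ ∈ X satisfy L²(u_Δ) = 0. Assume the coercivity-like property ‖L¹(v) − L¹(w)‖ ≥ α₁‖v − w‖ for all v,w ∈ X, and the Lipschitz-continuity-like property ‖(L¹(v) − L²(v)) − (L¹(w) − L²(w))‖ ≤ α₂·Δ·‖v − w‖ for all v,w ∈ X. If (u⁽ᵖ⁾)_{p≥0} is a sequence in X satisfying the Deferred Correction iteration L¹(u⁽ᵖ⁾) = L¹(u⁽ᵖ⁻¹⁾) − L²(u⁽ᵖ⁻¹⁾) for all p ≥ 1, then for every p ∈ ℕ one has ‖u⁽ᵖ⁾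 − u_Δ‖ ≤ (Δ·α₂/α₁)^p · ‖u⁽⁰⁾ − u_Δ‖. -/
/-! Deferred correction is an implicit iteration `F (u (p + 1)) = G (u p)` with `F = L¹` and
`G = L¹ - L²`, and a zero of `L²` is a point where `F` and `G` coincide. One step multiplies the
distance to such a point by at most the Lipschitz constant of `G` (`G` is evaluated) divided by the
coercivity constant of `F` (`F` is inverted). -/

section ImplicitIteration

variable {X Y : Type*} [PseudoMetricSpace X] [PseudoMetricSpace Y] {F G : X → Y} {α c : ℝ} {x : X}

theorem dist_le_div_mul_dist_of_map_eq_map {v w : X} (hα : 0 < α) (hx : F x = G x)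
    (hF : α * dist v x ≤ dist (F v) (F x)) (hG : dist (G w) (G x) ≤ c * dist w x)
    (hvw : F v = G w) : dist v x ≤ c / α * dist w x := by
  rw [div_mul_eq_mul_div, le_div_iff₀' hα]
  calc α * dist v x ≤ dist (F v) (F x) := hF
    _ = dist (G w) (G x) := by rw [hvw, hx]
    _ ≤ c * dist w x := hG

theorem deferred_correction_error_estimate_general (hα : 0 < α) (hc : 0 ≤ c) (hx : F x = G x)
    (hF : ∀ v, α * dist v x ≤ dist (F v) (F x)) (hG : ∀ v, dist (G v) (G x) ≤ c * dist v x)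
    {u : ℕ → X} (hu : ∀ p, F (u (p + 1)) = G (u p)) (p : ℕ) :
    dist (u p) x ≤ (c / α) ^ p * dist (u 0) x :=
  le_geom (u := fun k ↦ dist (u k) x) (div_nonneg hc hα.le) p fun k _ ↦
    dist_le_div_mul_dist_of_map_eq_map hα hx (hF (u (k + 1))) (hG (u k)) (hu k)

end ImplicitIteration

/-- The Deferred Correction error estimate: under the coercivity-like property of L¹ and the
Lipschitz-continuity-like property of L¹ − L², the DeC iterates satisfy
‖u⁽ᵖ⁾ − u_Δ‖ ≤ (Δ·α₂/α₁)ᵖ ‖u⁽⁰⁾ − u_Δ‖. -/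
theorem deferred_correction_error_estimate
    {X Y : Type*} [NormedAddCommGroup X] [NormedSpace ℝ X]
    [NormedAddCommGroup Y] [NormedSpace ℝ Y]
    (L1 L2 : X → Y) (Δ α₁ α₂ : ℝ)
    (hΔ : 0 < Δ) (hα₁ : 0 < α₁) (hα₂ : 0 ≤ α₂)
    (uΔ : X) (huΔ : L2 uΔ = 0)
    (hcoerc : ∀ v w : X, α₁ * ‖v - w‖ ≤ ‖L1 v - L1 w‖)
    (hlip : ∀ v w : X, ‖(L1 v - L2 v) - (L1 w - L2 w)‖ ≤ α₂ * Δ * ‖v - w‖)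
    (u : ℕ → X)
    (hiter : ∀ p : ℕ, L1 (u (p + 1)) = L1 (u p) - L2 (u p)) :
    ∀ p : ℕ, ‖u p - uΔ‖ ≤ (Δ * α₂ / α₁) ^ p * ‖u 0 - uΔ‖ := by
  simp only [← dist_eq_norm, mul_comm α₂ Δ] at hcoerc hlip ⊢
  exact deferred_correction_error_estimate_general (G := fun v ↦ L1 v - L2 v) hα₁ (by positivity)
    (by rw [huΔ, sub_zero]) (hcoerc · uΔ) (hlip · uΔ) hiter
end

section
/- Fix p* ∈ ℕ and constants Δ₀ > 0, a ≥ 0, C ≥ 0, c ≥ 0, c₀ ≥ 0. Then there exists K ≥ 0, depending only on p*, Δ₀, a, C, c, c₀, with the following property. Let 0 < Δ ≤ Δ₀; let (X⁽ᵖ⁾)_{p≥0} and (Y⁽ᵖ⁾)_{p≥1} be families of normed real vector spaces; for each p ≥ 1 let L¹⁽ᵖ⁾, L²⁽ᵖ⁾ : X⁽ᵖ⁾ → Y⁽ᵖ⁾ be maps, α₁⁽ᵖ⁾ > 0 and α₂⁽ᵖ⁾ ≥ 0 constants with α₂⁽ᵖ⁾/α₁⁽ᵖ⁾ ≤ a,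 and u_Δ⁽ᵖ⁾ ∈ X⁽ᵖ⁾ with L²⁽ᵖ⁾(u_Δ⁽ᵖ⁾) = 0, such that ‖L¹⁽ᵖ⁾(v) − L¹⁽ᵖ⁾(w)‖ ≥ α₁⁽ᵖ⁾‖v − w‖ and ‖(L¹⁽ᵖ⁾(v) − L²⁽ᵖ⁾(v)) − (L¹⁽ᵖ⁾(w) − L²⁽ᵖ⁾(w))‖ ≤ α₂⁽ᵖ⁾·Δ·‖v − w‖ for all v,w ∈ X⁽ᵖ⁾. For each p ≥ 0 let E⁽ᵖ⁾ : X⁽ᵖ⁾ → X⁽ᵖ⁺¹⁾ be an embedding map and u_ex⁽ᵖ⁾ ∈ X⁽ᵖ⁾ a projected exact solution, and let (u⁽ᵖ⁾)_{p≥0} with u⁽ᵖ⁾ ∈ X⁽ᵖ⁾ satisfy the modified DeC iteration L¹⁽ᵖ⁾(u⁽ᵖ⁾) = L¹⁽ᵖ⁾(E⁽ᵖ⁻¹⁾(u⁽ᵖ⁻¹⁾)) − L²⁽ᵖ⁾(E⁽ᵖ⁻¹⁾(u⁽ᵖ⁻¹⁾)) for all p ≥ 1. Assume moreover ‖u_Δ⁽ᵖ⁾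 − u_ex⁽ᵖ⁾‖ ≤ c·Δ^{p+1} for all 1 ≤ p ≤ p*, ‖E⁽ᵖ⁾(u⁽ᵖ⁾) − u_ex⁽ᵖ⁺¹⁾‖ ≤ C·‖u⁽ᵖ⁾ − u_ex⁽ᵖ⁾‖ for all 0 ≤ p < p*, and ‖u⁽⁰⁾ − u_ex⁽⁰⁾‖ ≤ c₀·Δ. Then ‖u⁽ᵖ*⁾ − u_ex⁽ᵖ*⁾‖ ≤ K·Δ^{p*+1}. -/
/-!
The error operator `L1 - L2` is Lipschitz with constant `α₂ * Δ`, while `L1` expands distances by at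
least `α₁`. As `uΔ` solves `L1 uΔ = (L1 - L2) uΔ`, a correction step contracts towards `uΔ` with
factor `(α₂ / α₁) * Δ ≤ a * Δ`, and it gains one order in `Δ`. Two triangle inequalities replace
`uΔ` by `uex`, so that the errors `e p` satisfy
`e (p + 1) ≤ a * C * Δ * e p + (1 + a * Δ) * c * Δ ^ (p + 2)`,
and solving this recursion gives a geometric sum with ratio `a * C`.
-/

open Finset

/-- The constant in the error bound of the modified Deferred Correction procedure after `n`
iterations with step size `δ`, obtained by solving the error recursion explicitly. Since it is
monotone in `δ`, its value at `Δ₀` serves all step sizes up to `Δ₀`. -/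
noncomputable def decErrorConstant (a C c c₀ δ : ℝ) (n : ℕ) : ℝ :=
  (a * C) ^ n * c₀ + (1 + a * δ) * c * ∑ i ∈ range n, (a * C) ^ i

section decErrorConstant

variable {a C c c₀ : ℝ}

theorem decErrorConstant_nonneg {δ : ℝ} (ha : 0 ≤ a) (hC : 0 ≤ C) (hc : 0 ≤ c) (hc₀ : 0 ≤ c₀)
    (hδ : 0 ≤ δ) (n : ℕ) : 0 ≤ decErrorConstant a C c c₀ δ n := by
  unfold decErrorConstant
  positivity

theorem decErrorConstant_mono (ha : 0 ≤ a) (hC : 0 ≤ C) (hc : 0 ≤ c) (n : ℕ) :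
    Monotone fun δ ↦ decErrorConstant a C c c₀ δ n := by
  intro δ δ' hδ
  dsimp only [decErrorConstant]
  gcongr

end decErrorConstant

theorem le_geom_sum_mul_pow_of_le_mul_add {R : Type*} [CommSemiring R] [PartialOrder R]
    [IsOrderedRing R] {e : ℕ → R} {q b k δ : R} {n : ℕ} (hq : 0 ≤ q) (hδ : 0 ≤ δ)
    (zero : e 0 ≤ k * δ) (succ : ∀ p < n, e (p + 1) ≤ q * δ * e p + b * δ ^ (p + 2)) :
    e n ≤ (q ^ n * k + b * ∑ i ∈ range n, q ^ i) * δ ^ (n + 1) := by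
  induction n with
  | zero => simpa using zero
  | succ n ih =>
    calc e (n + 1) ≤ q * δ * e n + b * δ ^ (n + 2) := succ n n.lt_succ_self
      _ ≤ q * δ * ((q ^ n * k + b * ∑ i ∈ range n, q ^ i) * δ ^ (n + 1)) + b * δ ^ (n + 2) := by
        gcongr
        exact ih fun p hp ↦ succ p (hp.trans n.lt_succ_self)
      _ = (q ^ (n + 1) * k + b * ∑ i ∈ range (n + 1), q ^ i) * δ ^ (n + 1 + 1) := by
        rw [geom_sum_succ]
        ring

theorem dist_le_mul_dist_add_of_dist_le_mul_dist {X : Type*} [PseudoMetricSpace X] {r : ℝ}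
    {v v' w x : X} (hr : 0 ≤ r) (h : dist v' w ≤ r * dist v w) :
    dist v' x ≤ r * dist v x + (1 + r) * dist w x :=
  calc dist v' x ≤ dist v' w + dist w x := dist_triangle ..
    _ ≤ r * dist v w + dist w x := by gcongr
    _ ≤ r * (dist v x + dist w x) + dist w x := by
      gcongr
      exact dist_triangle_right ..
    _ = r * dist v x + (1 + r) * dist w x := by ring

theorem dist_dec_correction_le {X Y : Type*} [PseudoMetricSpace X] [SeminormedAddGroup Y]
    {L1 L2 : X → Y} {α₁ β : ℝ} {v v' w : X} (hα₁ : 0 < α₁)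
    (expand : ∀ v w, α₁ * dist v w ≤ ‖L1 v - L1 w‖)
    (lip : ∀ v w, ‖(L1 v - L2 v) - (L1 w - L2 w)‖ ≤ β * dist v w)
    (hw : L2 w = 0) (correction : L1 v' = L1 v - L2 v) :
    dist v' w ≤ β / α₁ * dist v w := by
  have residual : ‖L1 v' - L1 w‖ ≤ β * dist v w := by
    simpa only [hw, sub_zero, ← correction] using lip v w
  rw [div_mul_eq_mul_div, le_div_iff₀' hα₁]
  exact (expand v' w).trans residual

theorem modified_dec_error_estimate_general {X Y : ℕ → Type*} [∀ p, PseudoMetricSpace (X p)]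
    [∀ p, SeminormedAddGroup (Y p)] {n : ℕ} {Δ a C c c₀ : ℝ} (hΔ : 0 ≤ Δ) (ha : 0 ≤ a)
    (hC : 0 ≤ C) {L1 L2 : ∀ p, X p → Y p} {α₁ α₂ : ℕ → ℝ} {uΔ : ∀ p, X p}
    (hα₁ : ∀ p, 1 ≤ p → 0 < α₁ p) (hα : ∀ p, 1 ≤ p → α₂ p / α₁ p ≤ a)
    (hL2 : ∀ p, 1 ≤ p → L2 p (uΔ p) = 0)
    (expand : ∀ p, 1 ≤ p → ∀ v w, α₁ p * dist v w ≤ ‖L1 p v - L1 p w‖)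
    (lip : ∀ p, 1 ≤ p → ∀ v w,
      ‖(L1 p v - L2 p v) - (L1 p w - L2 p w)‖ ≤ α₂ p * Δ * dist v w)
    {E : ∀ p, X p → X (p + 1)} {uex u : ∀ p, X p}
    (iteration : ∀ p, L1 (p + 1) (u (p + 1)) = L1 (p + 1) (E p (u p)) - L2 (p + 1) (E p (u p)))
    (consistency : ∀ p, 1 ≤ p → p ≤ n → dist (uΔ p) (uex p) ≤ c * Δ ^ (p + 1))
    (embedding : ∀ p < n, dist (E p (u p)) (uex (p + 1)) ≤ C * dist (u p) (uex p))
    (initial : dist (u 0) (uex 0) ≤ c₀ * Δ) :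
    dist (u n) (uex n) ≤ decErrorConstant a C c c₀ Δ n * Δ ^ (n + 1) := by
  refine le_geom_sum_mul_pow_of_le_mul_add (e := fun p ↦ dist (u p) (uex p)) (mul_nonneg ha hC) hΔ
    initial fun p hp ↦ ?_
  have hp₁ : 1 ≤ p + 1 := p.succ_pos
  have contraction : dist (u (p + 1)) (uΔ (p + 1)) ≤ a * Δ * dist (E p (u p)) (uΔ (p + 1)) :=
    calc dist (u (p + 1)) (uΔ (p + 1))
        ≤ α₂ (p + 1) * Δ / α₁ (p + 1) * dist (E p (u p)) (uΔ (p + 1)) :=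
          dist_dec_correction_le (hα₁ _ hp₁) (expand _ hp₁) (lip _ hp₁) (hL2 _ hp₁) (iteration p)
      _ ≤ a * Δ * dist (E p (u p)) (uΔ (p + 1)) := by
        rw [mul_div_right_comm]
        gcongr
        exact hα _ hp₁
  calc dist (u (p + 1)) (uex (p + 1))
      ≤ a * Δ * dist (E p (u p)) (uex (p + 1)) + (1 + a * Δ) * dist (uΔ (p + 1)) (uex (p + 1)) :=
        dist_le_mul_dist_add_of_dist_le_mul_dist (by positivity) contraction
    _ ≤ a * Δ * (C * dist (u p) (uex p)) + (1 + a * Δ) * (c * Δ ^ (p + 2)) := by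
      gcongr
      · exact embedding p hp
      · exact consistency _ hp₁ hp
    _ = a * C * Δ * dist (u p) (uex p) + (1 + a * Δ) * c * Δ ^ (p + 2) := by ring

/-- Error estimate for the modified (p-adaptive) Deferred Correction procedure: there is a
constant K, depending only on p*, Δ₀, a, C, c, c₀, bounding the final error by K·Δ^{p*+1}. -/
theorem modified_dec_error_estimate
    (pstar : ℕ) (Δ₀ a C c c₀ : ℝ)
    (hΔ₀ : 0 < Δ₀) (ha : 0 ≤ a) (hC : 0 ≤ C) (hc : 0 ≤ c) (hc₀ : 0 ≤ c₀) :
    ∃ K : ℝ, 0 ≤ K ∧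
      ∀ (Δ : ℝ), 0 < Δ → Δ ≤ Δ₀ →
      ∀ (X : ℕ → Type) (Y : ℕ → Type)
        [∀ p, NormedAddCommGroup (X p)] [∀ p, NormedSpace ℝ (X p)]
        [∀ p, NormedAddCommGroup (Y p)] [∀ p, NormedSpace ℝ (Y p)]
        (L1 L2 : ∀ p, X p → Y p) (α₁ α₂ : ℕ → ℝ) (uΔ : ∀ p, X p),
        (∀ p, 1 ≤ p → 0 < α₁ p) →
        (∀ p, 1 ≤ p → 0 ≤ α₂ p) →
        (∀ p, 1 ≤ p → α₂ p / α₁ p ≤ a) →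
        (∀ p, 1 ≤ p → L2 p (uΔ p) = 0) →
        (∀ p, 1 ≤ p → ∀ v w : X p, α₁ p * ‖v - w‖ ≤ ‖L1 p v - L1 p w‖) →
        (∀ p, 1 ≤ p → ∀ v w : X p,
          ‖(L1 p v - L2 p v) - (L1 p w - L2 p w)‖ ≤ α₂ p * Δ * ‖v - w‖) →
      ∀ (E : ∀ p, X p → X (p + 1)) (uex : ∀ p, X p) (u : ∀ p, X p),
        (∀ p : ℕ, L1 (p + 1) (u (p + 1))
            = L1 (p + 1) (E p (u p)) - L2 (p + 1) (E p (u p))) →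
        (∀ p, 1 ≤ p → p ≤ pstar → ‖uΔ p - uex p‖ ≤ c * Δ ^ (p + 1)) →
        (∀ p, p < pstar → ‖E p (u p) - uex (p + 1)‖ ≤ C * ‖u p - uex p‖) →
        ‖u 0 - uex 0‖ ≤ c₀ * Δ →
        ‖u pstar - uex pstar‖ ≤ K * Δ ^ (pstar + 1) := by
  refine ⟨decErrorConstant a C c c₀ Δ₀ pstar, decErrorConstant_nonneg ha hC hc hc₀ hΔ₀.le _, ?_⟩
  intro Δ hΔ hΔle X Y _ _ _ _ L1 L2 α₁ α₂ uΔ hα₁ _ hα hL2 expand lip E uex u iteration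
    consistency embedding initial
  simp only [← dist_eq_norm (E := X _)] at expand lip consistency embedding initial ⊢
  exact (modified_dec_error_estimate_general hΔ.le ha hC hα₁ hα hL2 expand lip iteration
    consistency embedding initial).trans <|
      mul_le_mul_of_nonneg_right (decErrorConstant_mono ha hC hc _ hΔle) (by positivity)
end

section
/- Let M₀ ≤ M₁ be natural numbers; let τ⁰ < ⋯ < τ^{M₀} be M₀+1 distinct points of [0,1] with associated Lagrange basis polynomials χ⁰,…,χ^{M₀} of degree M₀, and let σ⁰ < ⋯ < σ^{M₁} be M₁+1 distinct points of [0,1] with associated Lagrange basis polynomials ρ⁰,…,ρ^{M₁} of degree M₁. Define the interpolation matrix H by H_{km} = χᵐ(σᵏ). Then for all ℓ ∈ {0,…,M₁} and m ∈ {0,…,M₀}: Σ_{k=0}^{M₁} (∫₀¹ ρˡ(ξ) ρᵏ(ξ) dξ) · H_{km} = ∫₀¹ ρˡ(ξ) χᵐ(ξ) dξ. In matrix form, Λ⁽¹⁾H = Λ^{(1,0)}, where Λ⁽¹⁾ is the mass matrix of the fine Lagrange basis and Λ^{(1,0)} the mixed mass matrix; this identity establishes the equivalence of the ADERdu and ADER-L²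 iterations. -/
/-!
A polynomial of degree at most `M₁` coincides with its interpolant at the fine nodes, so its
coordinates in the fine Lagrange basis are its nodal values. The `m`-th column of `H` therefore
holds the coordinates of `χᵐ` in the basis `ρ`, and integrating the expansion
`χᵐ = ∑ₖ H_{km} ρᵏ` against `ρˡ` gives the identity.
-/

section LagrangeBasis

open Polynomial

theorem degree_lt_card_fin_succ_iff {R : Type*} [Semiring R] {p : R[X]} {n : ℕ} :
    p.degree < Fintype.card (Fin (n + 1)) ↔ p.natDegree ≤ n := by
  simp only [Fintype.card_fin, degree_lt_iff_coeff_zero, natDegree_le_iff_coeff_eq_zero,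
    Nat.succ_le_iff]

/-- `ρ` is the family of Lagrange basis polynomials of the nodes `σ`. It is characterised by degree
and nodal values, rather than by the product formula, so that it makes sense over any semiring. -/
structure IsLagrangeBasis {R ι : Type*} [Semiring R] [Fintype ι] [DecidableEq ι]
    (σ : ι → R) (ρ : ι → R[X]) : Prop where
  degree_lt : ∀ i, (ρ i).degree < Fintype.card ι
  eval_node : ∀ i j, (ρ i).eval (σ j) = if i = j then 1 else 0

namespace IsLagrangeBasis

variable {R ι : Type*} [Fintype ι] [DecidableEq ι] {σ : ι → R}

theorem injective [Semiring R] [Nontrivial R] {ρ : ι → R[X]} (hρ : IsLagrangeBasis σ ρ) :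
    Function.Injective σ := by
  intro i j hij
  by_contra hne
  have h : (ρ i).eval (σ i) = (ρ i).eval (σ j) := by rw [hij]
  rw [hρ.eval_node, hρ.eval_node, if_pos rfl, if_neg hne] at h
  exact one_ne_zero h

theorem eval_sum_smul [Semiring R] {ρ : ι → R[X]} (hρ : IsLagrangeBasis σ ρ)
    (c : ι → R) (j : ι) : (∑ i, c i • ρ i).eval (σ j) = c j := by
  simp only [eval_finsetSum, eval_smul, hρ.eval_node, smul_eq_mul, mul_ite, mul_one, mul_zero,
    Finset.sum_ite_eq', Finset.mem_univ, if_true]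

theorem degree_sum_smul_lt [Semiring R] {ρ : ι → R[X]} (hρ : IsLagrangeBasis σ ρ)
    (c : ι → R) : (∑ i, c i • ρ i).degree < Fintype.card ι :=
  mem_degreeLT.mp <| Submodule.sum_smul_mem _ _ fun i _ ↦ mem_degreeLT.mpr (hρ.degree_lt i)

theorem eq_sum_eval_smul [CommRing R] [IsDomain R] {ρ : ι → R[X]} (hρ : IsLagrangeBasis σ ρ)
    {p : R[X]} (hp : p.degree < Fintype.card ι) : p = ∑ i, p.eval (σ i) • ρ i := by
  refine eq_of_degrees_lt_of_eval_index_eq Finset.univ hρ.injective.injOn hp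
    (hρ.degree_sum_smul_lt _) fun j _ ↦ ?_
  rw [hρ.eval_sum_smul]

theorem eval_eq_sum [CommRing R] [IsDomain R] {ρ : ι → R[X]} (hρ : IsLagrangeBasis σ ρ)
    {p : R[X]} (hp : p.degree < Fintype.card ι) (x : R) :
    p.eval x = ∑ i, (ρ i).eval x * p.eval (σ i) := by
  conv_lhs => rw [hρ.eq_sum_eval_smul hp]
  simp only [eval_finsetSum, eval_smul, smul_eq_mul, mul_comm]

end IsLagrangeBasis

theorem ader_du_L2_equivalence_general {ι : Type*} [Fintype ι] [DecidableEq ι]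
    {σ : ι → ℝ} {ρ : ι → ℝ[X]} (hρ : IsLagrangeBasis σ ρ)
    {p : ℝ[X]} (hp : p.degree < Fintype.card ι)
    {μ : MeasureTheory.Measure ℝ} {a b : ℝ} {f : ℝ → ℝ} (hf : IntervalIntegrable f μ a b) :
    ∑ k, (∫ x in a..b, f x * (ρ k).eval x ∂μ) * p.eval (σ k)
      = ∫ x in a..b, f x * p.eval x ∂μ := by
  have integrable : ∀ k, IntervalIntegrable (fun x ↦ f x * (ρ k).eval x * p.eval (σ k)) μ a b :=
    fun k ↦ (hf.mul_continuousOn (ρ k).continuous.continuousOn).mul_const _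
  have expansion : ∀ x, ∑ k, f x * (ρ k).eval x * p.eval (σ k) = f x * p.eval x := fun x ↦ by
    rw [hρ.eval_eq_sum hp x, Finset.mul_sum]
    simp only [mul_assoc]
  calc ∑ k, (∫ x in a..b, f x * (ρ k).eval x ∂μ) * p.eval (σ k)
      = ∑ k, ∫ x in a..b, f x * (ρ k).eval x * p.eval (σ k) ∂μ := by
        simp only [intervalIntegral.integral_mul_const]
    _ = ∫ x in a..b, ∑ k, f x * (ρ k).eval x * p.eval (σ k) ∂μ :=
        (intervalIntegral.integral_finsetSum fun k _ ↦ integrable k).symm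
    _ = ∫ x in a..b, f x * p.eval x ∂μ := by
        simp only [expansion]

end LagrangeBasis

/-- Equivalence of ADERdu and ADER-L²: the fine mass matrix times the interpolation matrix
equals the mixed mass matrix, Λ⁽¹⁾H = Λ^{(1,0)}. -/
theorem ader_du_L2_equivalence
    (M₀ M₁ : ℕ) (hM : M₀ ≤ M₁)
    (τ : Fin (M₀ + 1) → ℝ) (σ : Fin (M₁ + 1) → ℝ)
    (hτ01 : ∀ m, τ m ∈ Set.Icc (0 : ℝ) 1) (hσ01 : ∀ m, σ m ∈ Set.Icc (0 : ℝ) 1)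
    (hτmono : StrictMono τ) (hσmono : StrictMono σ)
    (χ : Fin (M₀ + 1) → Polynomial ℝ)
    (hχdeg : ∀ m, (χ m).natDegree ≤ M₀)
    (hχeval : ∀ l m, (χ l).eval (τ m) = if l = m then 1 else 0)
    (ρ : Fin (M₁ + 1) → Polynomial ℝ)
    (hρdeg : ∀ m, (ρ m).natDegree ≤ M₁)
    (hρeval : ∀ l m, (ρ l).eval (σ m) = if l = m then 1 else 0)
    (Hmat : Matrix (Fin (M₁ + 1)) (Fin (M₀ + 1)) ℝ)
    (hH : ∀ k m, Hmat k m = (χ m).eval (σ k)) :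
    ∀ (l : Fin (M₁ + 1)) (m : Fin (M₀ + 1)),
      ∑ k, (∫ x in (0 : ℝ)..1, (ρ l).eval x * (ρ k).eval x) * Hmat k m
        = ∫ x in (0 : ℝ)..1, (ρ l).eval x * (χ m).eval x := by
  intro l m
  have hρ : IsLagrangeBasis σ ρ := ⟨fun k ↦ degree_lt_card_fin_succ_iff.mpr (hρdeg k), hρeval⟩
  simpa only [hH] using ader_du_L2_equivalence_general hρ
    (degree_lt_card_fin_succ_iff.mpr ((hχdeg m).trans hM)) ((ρ l).continuous.intervalIntegrable 0 1)
end

section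
/- Assume B is invertible and let z ∈ ℂ. Define the sequence of vectors y⁽ᵖ⁾ ∈ ℂ^{M+1} by y⁽⁰⁾ = 𝟙 (the all-ones vector) and y⁽ᵖ⁾ = 𝟙 + z·(B⁻¹Λ)·y⁽ᵖ⁻¹⁾ for p ≥ 1 (the ADER fixed-point iteration applied to Dahlquist's equation u′ = λu with z = λΔt, normalized by u_n). Then the ADER method of order M+1, i.e. M+1 iterations followed by the weighted final update, has the truncated-exponential stability function: 1 + z·Σ_{m=0}^{M} w_m·(y⁽ᴹ⁾)_m = Σ_{r=0}^{M+1} z^r / r!. -/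
/-!
If `p = ∑ aₘ ψₘ` vanishes at `0` and `p' = ∑ bₘ ψₘ`, integration by parts gives `B a = Λ b`.
Applied to nodal values of `x ^ (k + 1)`, this says that `B⁻¹ Λ` integrates monomials of degree
less than `M` exactly from `0` to each node; the weights integrate monomials of degree at most `M`
exactly over `[0, 1]`. Each iteration is then a Picard step for `u' = z u`, which turns the Taylor
polynomial of `exp (z x)` of degree less than `M` into the next one; the final update is one more
such step, evaluated at `x = 1`.
-/

open Finset Matrix Polynomial
open scoped Nat

namespace Ader

section OrderConditions

variable {ι K : Type*} [Fintype ι] [Field K]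

/-- Butcher's simplifying assumption `C(n)` for the Runge–Kutta coefficients `A` and abscissae `c`.
Powers of `c` are taken componentwise. -/
def HasStageOrder (A : Matrix ι ι K) (c : ι → K) (n : ℕ) : Prop :=
  ∀ k < n, A *ᵥ c ^ k = ((k : K) + 1)⁻¹ • c ^ (k + 1)

/-- Butcher's simplifying assumption `B(n)`: the quadrature rule on `[0, 1]` with weights `b` and
abscissae `c` is exact on the monomials of degree less than `n`. -/
def HasQuadratureOrder (b c : ι → K) (n : ℕ) : Prop :=
  ∀ k < n, b ⬝ᵥ c ^ k = ((k : K) + 1)⁻¹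

variable {A : Matrix ι ι K} {b c : ι → K} {n : ℕ}

theorem HasStageOrder.mono {m : ℕ} (hA : HasStageOrder A c n) (hmn : m ≤ n) :
    HasStageOrder A c m :=
  fun k hk ↦ hA k (hk.trans_le hmn)

theorem HasStageOrder.map {L : Type*} [Field L] (hA : HasStageOrder A c n) (f : K →+* L) :
    HasStageOrder (A.map f) (f ∘ c) n := by
  intro k hk
  ext i
  simpa [RingHom.map_mulVec, Function.comp_def, Pi.pow_def] using
    congrArg f (congrFun (hA k hk) i)

theorem HasQuadratureOrder.map {L : Type*} [Field L] (hb : HasQuadratureOrder b c n)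
    (f : K →+* L) : HasQuadratureOrder (f ∘ b) (f ∘ c) n := by
  intro k hk
  simpa [RingHom.map_dotProduct, Function.comp_def, Pi.pow_def] using congrArg f (hb k hk)

theorem mul_pow_div_factorial_mul_inv (z : K) (r : ℕ) :
    z * (z ^ r / r !) * ((r : K) + 1)⁻¹ = z ^ (r + 1) / (r + 1)! := by
  rw [Nat.factorial_succ, Nat.cast_mul, Nat.cast_succ, pow_succ', mul_div_assoc', ← div_eq_mul_inv,
    div_div, mul_comm (r ! : K)]

theorem HasStageOrder.one_add_smul_mulVec_sum (hA : HasStageOrder A c n) (z : K) :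
    1 + z • A *ᵥ ∑ r ∈ range n, (z ^ r / r !) • c ^ r =
      ∑ r ∈ range (n + 1), (z ^ r / r !) • c ^ r := by
  have term_step : ∀ r ∈ range n,
      z • A *ᵥ ((z ^ r / r !) • c ^ r) = (z ^ (r + 1) / (r + 1)!) • c ^ (r + 1) := by
    intro r hr
    rw [mulVec_smul, hA r (mem_range.1 hr), smul_smul, smul_smul, mul_pow_div_factorial_mul_inv]
  rw [mulVec_sum, smul_sum, sum_congr rfl term_step, sum_range_succ', add_comm]
  simp

theorem HasQuadratureOrder.one_add_mul_dotProduct_sum (hb : HasQuadratureOrder b c n) (z : K) :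
    1 + z * b ⬝ᵥ ∑ r ∈ range n, (z ^ r / r !) • c ^ r = ∑ r ∈ range (n + 1), z ^ r / r ! := by
  have term_step : ∀ r ∈ range n,
      z * b ⬝ᵥ ((z ^ r / r !) • c ^ r) = z ^ (r + 1) / (r + 1)! := by
    intro r hr
    rw [dotProduct_smul, hb r (mem_range.1 hr), smul_eq_mul, ← mul_assoc,
      mul_pow_div_factorial_mul_inv]
  rw [dotProduct_sum, mul_sum, sum_congr rfl term_step, sum_range_succ', add_comm]
  simp

theorem HasStageOrder.picard_eq_sum {z : K} {y : ℕ → ι → K} {p : ℕ} (hA : HasStageOrder A c p)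
    (hy0 : y 0 = 1) (hy : ∀ p, y (p + 1) = 1 + z • A *ᵥ y p) :
    y p = ∑ r ∈ range (p + 1), (z ^ r / r !) • c ^ r := by
  induction p with
  | zero => simp [hy0]
  | succ p ih => rw [hy, ih (hA.mono p.le_succ), hA.one_add_smul_mulVec_sum]

end OrderConditions

theorem map_nonsing_inv {ι R S : Type*} [Fintype ι] [DecidableEq ι] [CommRing R] [CommRing S]
    (f : R →+* S) {A : Matrix ι ι R} (hA : IsUnit A.det) : A⁻¹.map f = (A.map f)⁻¹ := by
  refine (inv_eq_left_inv ?_).symm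
  rw [← Matrix.map_mul, nonsing_inv_mul _ hA, Matrix.map_one _ f.map_zero f.map_one]

theorem sum_eval_smul_eq {ι R : Type*} [Fintype ι] [DecidableEq ι] [CommRing R] [IsDomain R]
    {ξ : ι → R} {ψ : ι → R[X]} (hdeg : ∀ l, (ψ l).natDegree < Fintype.card ι)
    (heval : ∀ l m, (ψ l).eval (ξ m) = if l = m then 1 else 0)
    {p : R[X]} (hp : p.natDegree < Fintype.card ι) : ∑ m, p.eval (ξ m) • ψ m = p := by
  have hξ : Function.Injective ξ := fun i j hij ↦ by
    by_contra hne
    simpa [heval, hne] using congrArg (fun x ↦ (ψ i).eval x) hij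
  have hsum : (∑ m, p.eval (ξ m) • ψ m).natDegree ≤ Fintype.card ι - 1 :=
    natDegree_sum_le_of_forall_le _ _ fun m _ ↦
      (natDegree_smul_le _ _).trans (Nat.le_sub_one_of_lt (hdeg m))
  refine eq_of_natDegree_lt_card_of_eval_eq _ _ hξ (fun i ↦ ?_) (max_lt (by omega) hp)
  simp [eval_finsetSum, heval]

section Galerkin

variable {ι : Type*} (ψ : ι → ℝ[X])

/-- The ADER matrix `B` of a family of trial polynomials: the weak form on `[0, 1]` of the time
derivative, without its contribution from the initial time. -/
noncomputable def evolutionMatrix : Matrix ι ι ℝ :=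
  .of fun l m ↦ (ψ l).eval 1 * (ψ m).eval 1 -
    ∫ x in (0 : ℝ)..1, (ψ l).derivative.eval x * (ψ m).eval x

/-- The ADER matrix `Λ`: the Gram matrix of a family of polynomials in `L²(0, 1)`. -/
noncomputable def massMatrix : Matrix ι ι ℝ :=
  .of fun l m ↦ ∫ x in (0 : ℝ)..1, (ψ l).eval x * (ψ m).eval x

/-- The quadrature weights `∫₀¹ ψₘ` of a family of polynomials. -/
noncomputable def quadratureWeights : ι → ℝ :=
  fun m ↦ ∫ x in (0 : ℝ)..1, (ψ m).eval x

variable {ψ} [Fintype ι]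

theorem sum_integral_mul_eval_mul (q : ℝ[X]) (a : ι → ℝ) :
    ∑ m, (∫ x in (0 : ℝ)..1, q.eval x * (ψ m).eval x) * a m =
      ∫ x in (0 : ℝ)..1, q.eval x * (∑ m, a m • ψ m).eval x := by
  simp_rw [← intervalIntegral.integral_mul_const]
  rw [← intervalIntegral.integral_finsetSum
    fun m _ ↦ (by fun_prop : Continuous _).intervalIntegrable _ _]
  simp only [eval_finsetSum, eval_smul, smul_eq_mul, mul_sum, mul_left_comm, mul_comm]

theorem massMatrix_mulVec (a : ι → ℝ) (l : ι) :
    (massMatrix ψ *ᵥ a) l = ∫ x in (0 : ℝ)..1, (ψ l).eval x * (∑ m, a m • ψ m).eval x :=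
  sum_integral_mul_eval_mul (ψ l) a

theorem evolutionMatrix_mulVec (a : ι → ℝ) (l : ι) :
    (evolutionMatrix ψ *ᵥ a) l = (ψ l).eval 1 * (∑ m, a m • ψ m).eval 1 -
      ∫ x in (0 : ℝ)..1, (ψ l).derivative.eval x * (∑ m, a m • ψ m).eval x := by
  simp only [mulVec, dotProduct, evolutionMatrix, of_apply, sub_mul, sum_sub_distrib,
    sum_integral_mul_eval_mul]
  simp only [eval_finsetSum, eval_smul, smul_eq_mul, mul_sum, mul_assoc, mul_comm (a _)]

theorem quadratureWeights_dotProduct (a : ι → ℝ) :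
    quadratureWeights ψ ⬝ᵥ a = ∫ x in (0 : ℝ)..1, (∑ m, a m • ψ m).eval x := by
  simpa [dotProduct, quadratureWeights] using sum_integral_mul_eval_mul (ψ := ψ) 1 a

theorem integral_eval_mul_eval_derivative (q p : ℝ[X]) (s t : ℝ) :
    ∫ x in s..t, q.eval x * p.derivative.eval x =
      q.eval t * p.eval t - q.eval s * p.eval s - ∫ x in s..t, q.derivative.eval x * p.eval x :=
  intervalIntegral.integral_mul_deriv_eq_deriv_mul
    (fun x _ ↦ q.hasDerivAt x) (fun x _ ↦ p.hasDerivAt x)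
    (q.derivative.continuous.intervalIntegrable _ _)
    (p.derivative.continuous.intervalIntegrable _ _)

theorem evolutionMatrix_mulVec_eq_massMatrix_mulVec {a b : ι → ℝ}
    (h0 : (∑ m, a m • ψ m).eval 0 = 0) (hab : derivative (∑ m, a m • ψ m) = ∑ m, b m • ψ m) :
    evolutionMatrix ψ *ᵥ a = massMatrix ψ *ᵥ b := by
  ext l
  rw [evolutionMatrix_mulVec, massMatrix_mulVec, ← hab, integral_eval_mul_eval_derivative, h0,
    mul_zero, sub_zero]

variable {ξ : ι → ℝ} {n : ℕ}

theorem evolutionMatrix_mulVec_pow_succ {k : ℕ} (hk : ∑ m, ξ m ^ k • ψ m = X ^ k)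
    (hk_succ : ∑ m, ξ m ^ (k + 1) • ψ m = X ^ (k + 1)) :
    evolutionMatrix ψ *ᵥ ξ ^ (k + 1) = massMatrix ψ *ᵥ (((k : ℝ) + 1) • ξ ^ k) := by
  apply evolutionMatrix_mulVec_eq_massMatrix_mulVec
  · simp [hk_succ]
  · simp only [Pi.pow_apply, Pi.smul_apply, smul_assoc, ← smul_sum, hk, hk_succ,
      derivative_X_pow_succ, ← smul_eq_C_mul]

theorem hasStageOrder_inv_evolutionMatrix_mul_massMatrix [DecidableEq ι]
    (hψ : ∀ k ≤ n, ∑ m, ξ m ^ k • ψ m = X ^ k) (hB : IsUnit (evolutionMatrix ψ).det) :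
    HasStageOrder ((evolutionMatrix ψ)⁻¹ * massMatrix ψ) ξ n := by
  intro k hk
  rw [eq_inv_smul_iff₀ (Nat.cast_add_one_ne_zero k), ← mulVec_smul, ← mulVec_mulVec,
    ← evolutionMatrix_mulVec_pow_succ (hψ k hk.le) (hψ (k + 1) hk), mulVec_mulVec,
    nonsing_inv_mul _ hB, one_mulVec]

theorem hasQuadratureOrder_quadratureWeights (hψ : ∀ k < n, ∑ m, ξ m ^ k • ψ m = X ^ k) :
    HasQuadratureOrder (quadratureWeights ψ) ξ n := by
  intro k hk
  simp [quadratureWeights_dotProduct, hψ k hk]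

end Galerkin

end Ader

open Ader in
theorem ader_stability_function_general {ι K : Type*} [Fintype ι] [DecidableEq ι]
    [Field K] [Algebra ℝ K] (ξ : ι → ℝ) (ψ : ι → ℝ[X])
    (hψdeg : ∀ l, (ψ l).natDegree < Fintype.card ι)
    (hψeval : ∀ l m, (ψ l).eval (ξ m) = if l = m then 1 else 0)
    (B Λ : Matrix ι ι ℝ)
    (hB : ∀ l m, B l m = (ψ l).eval 1 * (ψ m).eval 1 -
        ∫ x in (0 : ℝ)..1, (ψ l).derivative.eval x * (ψ m).eval x)
    (hΛ : ∀ l m, Λ l m = ∫ x in (0 : ℝ)..1, (ψ l).eval x * (ψ m).eval x)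
    (w : ι → ℝ) (hw : ∀ m, w m = ∫ x in (0 : ℝ)..1, (ψ m).eval x)
    (hBinv : IsUnit B.det) (z : K) (y : ℕ → ι → K) (hy0 : y 0 = 1)
    (hy : ∀ p, y (p + 1) =
      1 + z • ((B.map (algebraMap ℝ K))⁻¹ * Λ.map (algebraMap ℝ K)) *ᵥ y p)
    {p : ℕ} (hp : p < Fintype.card ι) :
    1 + z * ∑ m, algebraMap ℝ K (w m) * y p m = ∑ r ∈ range (p + 2), z ^ r / r ! := by
  obtain rfl : B = evolutionMatrix ψ := Matrix.ext hB
  obtain rfl : Λ = massMatrix ψ := Matrix.ext hΛ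
  obtain rfl : w = quadratureWeights ψ := funext hw
  have monomials : ∀ k ≤ p, ∑ m, ξ m ^ k • ψ m = X ^ k := fun k hk ↦ by
    simpa using sum_eval_smul_eq hψdeg hψeval (p := X ^ k) (by simpa using hk.trans_lt hp)
  have stages :=
    (hasStageOrder_inv_evolutionMatrix_mul_massMatrix monomials hBinv).map (algebraMap ℝ K)
  have weights := (hasQuadratureOrder_quadratureWeights (n := p + 1)
    fun k hk ↦ monomials k (Nat.le_of_lt_succ hk)).map (algebraMap ℝ K)
  rw [Matrix.map_mul, map_nonsing_inv _ hBinv] at stages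
  rw [stages.picard_eq_sum hy0 hy]
  exact weights.one_add_mul_dotProduct_sum z

/-- The stability function of the ADER method of order M+1 (M+1 iterations of the
fixed-point map on Dahlquist's equation followed by the weighted final update) is the
truncated exponential Σ_{r=0}^{M+1} zʳ/r!. -/
theorem ader_stability_function
    (M : ℕ) (hM : 1 ≤ M)
    (ξ : Fin (M + 1) → ℝ)
    (hξ01 : ∀ m, ξ m ∈ Set.Icc (0 : ℝ) 1)
    (hξmono : StrictMono ξ)
    (ψ : Fin (M + 1) → Polynomial ℝ)
    (hψdeg : ∀ l, (ψ l).natDegree ≤ M)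
    (hψeval : ∀ l m, (ψ l).eval (ξ m) = if l = m then 1 else 0)
    (Bmat Lam : Matrix (Fin (M + 1)) (Fin (M + 1)) ℝ)
    (hB : ∀ l m, Bmat l m = (ψ l).eval 1 * (ψ m).eval 1 -
        ∫ x in (0 : ℝ)..1, (ψ l).derivative.eval x * (ψ m).eval x)
    (hLam : ∀ l m, Lam l m = ∫ x in (0 : ℝ)..1, (ψ l).eval x * (ψ m).eval x)
    (w : Fin (M + 1) → ℝ)
    (hw : ∀ m, w m = ∫ x in (0 : ℝ)..1, (ψ m).eval x)
    (hBinv : IsUnit Bmat.det) (z : ℂ)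
    (y : ℕ → Fin (M + 1) → ℂ)
    (hy0 : y 0 = fun _ => 1)
    (hy : ∀ p l, y (p + 1) l = 1 + z * ∑ m,
      (((Bmat.map Complex.ofReal)⁻¹ * Lam.map Complex.ofReal) l m) * y p m) :
    1 + z * ∑ m, (w m : ℂ) * y M m
      = ∑ r ∈ Finset.range (M + 2), z ^ r / (Nat.factorial r : ℂ) :=
  ader_stability_function_general ξ ψ (by simpa [Nat.lt_succ_iff] using hψdeg) hψeval Bmat Lam
    hB hLam w hw hBinv z y hy0 (fun p ↦ funext (hy p)) (by simp)
end

section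
/- Assume B is invertible, let G : ℝ × ℝ^Q → ℝ^Q satisfy ‖G(t,u) − G(t,v)‖_∞ ≤ C‖u − v‖_∞ for all t, u, v, fix t_n ∈ ℝ, u_n ∈ ℝ^Q and Δt > 0, set tᵐ = t_n + Δt·ξᵐ, and define the ADER-DeC operators L¹, L² : (ℝ^Q)^{M+1} → (ℝ^Q)^{M+1} by L¹(u)_ℓ = u_ℓ − u_n − Δt Σ_m (B⁻¹Λ)_{ℓm} G(tᵐ, u_n) and L²(u)_ℓ = u_ℓ − u_n − Δt Σ_m (B⁻¹Λ)_{ℓm} G(tᵐ, uᵐ). Equip (ℝ^Q)^{M+1} with ‖u‖_∞ = max_m ‖uᵐ‖_∞. Then L¹ and L² satisfy the DeC hypotheses with α₁ = 1 and α₂ = ‖B⁻¹Λ‖_∞·C: namely ‖L¹(v) − L¹(w)‖_∞ = ‖v − w‖_∞ for all v, w, and ‖(L¹(v) − L²(v)) − (L¹(w) − L²(w))‖_∞ ≤ Δt·‖B⁻¹Λ‖_∞·C·‖v − w‖_∞ for all v, w, where ‖A‖_∞ denotes the maximum absolute row sum of a matrix. -/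
/-!
Both operators send `u` to `u - u₀ - h • A • f` with `A = B⁻¹Λ`, and differ only in the vector `f`
of nodal slopes. For `L¹` the slopes do not depend on `u`, so differences of values are differences
of arguments. In `L¹ - L²` the term `u - u₀` cancels, leaving `h • A` applied to a difference of
slopes, and the norm of `A` on families with the sup norm is at most its maximum absolute row sum.
-/

section MatrixNorm

open scoped Matrix.Norms.Operator

theorem linfty_opNorm_eq_iSup_sum_norm {ι κ α : Type*} [Fintype ι] [Fintype κ]
    [SeminormedAddCommGroup α] (A : Matrix ι κ α) : ‖A‖ = ⨆ i, ∑ j, ‖A i j‖ := by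
  simp only [Matrix.linfty_opNorm_def, Finset.sup_univ_eq_ciSup, NNReal.coe_iSup, NNReal.coe_sum,
    coe_nnnorm]

theorem sum_norm_le_linfty_opNorm {ι κ α : Type*} [Fintype ι] [Fintype κ]
    [SeminormedAddCommGroup α] (A : Matrix ι κ α) (i : ι) : ∑ j, ‖A i j‖ ≤ ‖A‖ := by
  rw [linfty_opNorm_eq_iSup_sum_norm]
  exact le_ciSup (f := fun i => ∑ j, ‖A i j‖) (Set.finite_range _).bddAbove i

open scoped Matrix.Module in
theorem norm_matrix_smul_le {ι R E : Type*} [Fintype ι] [DecidableEq ι] [SeminormedRing R]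
    [SeminormedAddCommGroup E] [Module R E] [IsBoundedSMul R E] (A : Matrix ι ι R) (u : ι → E) :
    ‖A • u‖ ≤ ‖A‖ * ‖u‖ := by
  refine (pi_norm_le_iff_of_nonneg (by positivity)).2 fun i => ?_
  calc ‖∑ j, A i j • u j‖
      ≤ ∑ j, ‖A i j‖ * ‖u‖ := norm_sum_le_of_le _ fun j _ =>
        (norm_smul_le _ _).trans (by gcongr; exact norm_le_pi_norm u j)
    _ = (∑ j, ‖A i j‖) * ‖u‖ := (Finset.sum_mul ..).symm
    _ ≤ ‖A‖ * ‖u‖ := by gcongr; exact sum_norm_le_linfty_opNorm A i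

end MatrixNorm

theorem norm_piMap_sub_piMap_le {ι : Type*} [Fintype ι] {E F : ι → Type*}
    [∀ i, SeminormedAddCommGroup (E i)] [∀ i, SeminormedAddCommGroup (F i)]
    {g : ∀ i, E i → F i} {C : ℝ} (hC : 0 ≤ C)
    (hg : ∀ i x y, ‖g i x - g i y‖ ≤ C * ‖x - y‖) (u v : ∀ i, E i) :
    ‖Pi.map g u - Pi.map g v‖ ≤ C * ‖u - v‖ := by
  refine (pi_norm_le_iff_of_nonneg (by positivity)).2 fun i => (hg i _ _).trans ?_
  gcongr
  exact norm_le_pi_norm (u - v) i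

section AderDec

open scoped Matrix.Module

variable {ι R E : Type*} [Fintype ι] [DecidableEq ι]

section Algebra

variable [Ring R] [AddCommGroup E] [Module R E]

/-- The residual `u - u₀ - h A f` at the nodes `ι` of one collocation step of size `h` from the
value `u₀`, where `f` holds the slopes at the nodes and `(A • f) l = ∑ m, A l m • f m`. -/
def collocationResidual (A : Matrix ι ι R) (h : R) (u₀ : E) (f u : ι → E) : ι → E :=
  u - Function.const ι u₀ - h • A • f

/-- The low order ADER-DeC operator `L¹`, with every slope evaluated at `u₀`. Here `g m` is the
evolution function at the time of the node `m`, that is `G(tᵐ, ·)`. -/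
def aderDecLow (A : Matrix ι ι R) (h : R) (u₀ : E) (g : ι → E → E) (u : ι → E) : ι → E :=
  collocationResidual A h u₀ (Pi.map g (Function.const ι u₀)) u

/-- The high order ADER-DeC operator `L²`, with the slope at the node `m` evaluated at `u m`. As in
`aderDecLow`, `g m` stands for `G(tᵐ, ·)`. -/
def aderDecHigh (A : Matrix ι ι R) (h : R) (u₀ : E) (g : ι → E → E) (u : ι → E) : ι → E :=
  collocationResidual A h u₀ (Pi.map g u) u

theorem collocationResidual_sub_of_same_slopes (A : Matrix ι ι R) (h : R) (u₀ : E)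
    (f u v : ι → E) :
    collocationResidual A h u₀ f u - collocationResidual A h u₀ f v = u - v := by
  simp only [collocationResidual]
  abel

theorem collocationResidual_sub_of_same_values (A : Matrix ι ι R) (h : R) (u₀ : E)
    (f g u : ι → E) :
    collocationResidual A h u₀ f u - collocationResidual A h u₀ g u = h • A • (g - f) := by
  simp only [collocationResidual, smul_sub]
  abel

theorem aderDecLow_sub_aderDecLow (A : Matrix ι ι R) (h : R) (u₀ : E) (g : ι → E → E)
    (u v : ι → E) : aderDecLow A h u₀ g u - aderDecLow A h u₀ g v = u - v :=
  collocationResidual_sub_of_same_slopes ..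

theorem aderDecLow_sub_aderDecHigh_sub (A : Matrix ι ι R) (h : R) (u₀ : E) (g : ι → E → E)
    (u v : ι → E) :
    (aderDecLow A h u₀ g u - aderDecHigh A h u₀ g u) -
        (aderDecLow A h u₀ g v - aderDecHigh A h u₀ g v) =
      h • A • (Pi.map g u - Pi.map g v) := by
  simp only [aderDecLow, aderDecHigh, collocationResidual_sub_of_same_values, smul_sub]
  abel

end Algebra

variable [SeminormedRing R] [SeminormedAddCommGroup E] [Module R E] [IsBoundedSMul R E]

open scoped Matrix.Norms.Operator in
theorem ader_dec_operators_properties_general (A : Matrix ι ι R) (h : R) (u₀ : E)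
    {g : ι → E → E} {C : ℝ} (hC : 0 ≤ C) (hg : ∀ m u v, ‖g m u - g m v‖ ≤ C * ‖u - v‖) :
    (∀ v v', ‖aderDecLow A h u₀ g v - aderDecLow A h u₀ g v'‖ = ‖v - v'‖) ∧
    (∀ v v', ‖(aderDecLow A h u₀ g v - aderDecHigh A h u₀ g v) -
        (aderDecLow A h u₀ g v' - aderDecHigh A h u₀ g v')‖ ≤ ‖h‖ * ‖A‖ * C * ‖v - v'‖) := by
  refine ⟨fun v v' => by rw [aderDecLow_sub_aderDecLow], fun v v' => ?_⟩
  rw [aderDecLow_sub_aderDecHigh_sub]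
  calc ‖h • A • (Pi.map g v - Pi.map g v')‖
      ≤ ‖h‖ * ‖A • (Pi.map g v - Pi.map g v')‖ := norm_smul_le _ _
    _ ≤ ‖h‖ * (‖A‖ * ‖Pi.map g v - Pi.map g v'‖) := by gcongr; exact norm_matrix_smul_le _ _
    _ ≤ ‖h‖ * (‖A‖ * (C * ‖v - v'‖)) := by gcongr; exact norm_piMap_sub_piMap_le hC hg v v'
    _ = ‖h‖ * ‖A‖ * C * ‖v - v'‖ := by ring

end AderDec

/-- The ADER-DeC operators L¹ and L² satisfy the DeC hypotheses with α₁ = 1 and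
α₂ = ‖B⁻¹Λ‖_∞·C: L¹ is an isometry-like operator and L¹ − L² is Lipschitz with constant
Δt·‖B⁻¹Λ‖_∞·C, in the sup norm. -/
theorem ader_dec_operators_properties
    (M : ℕ) (hM : 1 ≤ M)
    (ξ : Fin (M + 1) → ℝ)
    (hξ01 : ∀ m, ξ m ∈ Set.Icc (0 : ℝ) 1)
    (hξmono : StrictMono ξ)
    (ψ : Fin (M + 1) → Polynomial ℝ)
    (hψdeg : ∀ l, (ψ l).natDegree ≤ M)
    (hψeval : ∀ l m, (ψ l).eval (ξ m) = if l = m then 1 else 0)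
    (Bmat Lam : Matrix (Fin (M + 1)) (Fin (M + 1)) ℝ)
    (hB : ∀ l m, Bmat l m = (ψ l).eval 1 * (ψ m).eval 1 -
        ∫ x in (0 : ℝ)..1, (ψ l).derivative.eval x * (ψ m).eval x)
    (hLam : ∀ l m, Lam l m = ∫ x in (0 : ℝ)..1, (ψ l).eval x * (ψ m).eval x)
    (w : Fin (M + 1) → ℝ)
    (hw : ∀ m, w m = ∫ x in (0 : ℝ)..1, (ψ m).eval x)
    (hBinv : IsUnit Bmat.det)
    (Q : ℕ) (G : ℝ → (Fin Q → ℝ) → (Fin Q → ℝ)) (C : ℝ) (hC : 0 ≤ C)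
    (hG : ∀ (t : ℝ) (u v : Fin Q → ℝ), ‖G t u - G t v‖ ≤ C * ‖u - v‖)
    (tn : ℝ) (un : Fin Q → ℝ) (Δt : ℝ) (hΔt : 0 < Δt)
    (L1 L2 : (Fin (M + 1) → Fin Q → ℝ) → (Fin (M + 1) → Fin Q → ℝ))
    (hL1 : ∀ u l, L1 u l = u l - un -
      Δt • ∑ m, ((Bmat⁻¹ * Lam) l m) • G (tn + Δt * ξ m) un)
    (hL2 : ∀ u l, L2 u l = u l - un -
      Δt • ∑ m, ((Bmat⁻¹ * Lam) l m) • G (tn + Δt * ξ m) (u m)) :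
    (∀ v v' : Fin (M + 1) → Fin Q → ℝ, ‖L1 v - L1 v'‖ = ‖v - v'‖) ∧
    (∀ v v' : Fin (M + 1) → Fin Q → ℝ,
      ‖(L1 v - L2 v) - (L1 v' - L2 v')‖
        ≤ Δt * (⨆ l, ∑ m, |(Bmat⁻¹ * Lam) l m|) * C * ‖v - v'‖) := by
  obtain ⟨rfl, rfl⟩ : L1 = aderDecLow (Bmat⁻¹ * Lam) Δt un (fun m => G (tn + Δt * ξ m)) ∧
      L2 = aderDecHigh (Bmat⁻¹ * Lam) Δt un (fun m => G (tn + Δt * ξ m)) :=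
    ⟨funext₂ hL1, funext₂ hL2⟩
  simpa only [linfty_opNorm_eq_iSup_sum_norm, Real.norm_of_nonneg hΔt.le, Real.norm_eq_abs] using
    ader_dec_operators_properties_general (Bmat⁻¹ * Lam) Δt un hC fun m => hG (tn + Δt * ξ m)
end
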